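/- Let $n \geq 3$ and $W \in L^{n/2,1}(\mathbb{R}^n)$. Define recursively $G_0(x,y) = c_n|x-y|^{-(n-2)}$ and $G_j(x,y) = c_n\int_{\mathbb{R}^n} |x-z|^{-(n-2)} W(z) G_{j-1}(z,y)\,dz$ for $j \geq 1$. Then for every $j \geq 0$ and all $x \neq y$ one has $|G_j(x,y)| \leq C^j G_0(x,y)$, where $C = 2^{n-1} c_n \|a\|_{\frac{n}{n-2},\infty} \|W\|_{n/2,1}$ and $a(x) = |x|^{-(n-2)}$. -/

import Mathlib

open MeasureTheory ENNReal Filter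
open scoped ENNReal NNReal

noncomputable section

/-- Euclidean space `ℝⁿ`. -/
abbrev Rn (n : ℕ) : Type := EuclideanSpace ℝ (Fin n)

/-- The distribution function `d_f(t) = |{x : |f x| > t}|` (Lebesgue measure). -/
def distFun {n : ℕ} (f : Rn n → ℂ) (t : ℝ) : ℝ≥0∞ :=
  volume {x : Rn n | t < ‖f x‖}

/-- The Lorentz quasinorm `‖f‖_{p,q}` (valued in `ℝ≥0∞`).  For `q < ∞` it is
`p^{1/q} (∫_0^∞ t^{q-1} d_f(t)^{q/p} dt)^{1/q}`; for `q = ∞`, `p < ∞` it is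
`sup_{t>0} t · d_f(t)^{1/p}`; for `p = q = ∞` it is the essential supremum (`L^∞`). -/
def lorentzNorm {n : ℕ} (f : Rn n → ℂ) (p q : ℝ≥0∞) : ℝ≥0∞ :=
  if q = ∞ then
    if p = ∞ then essSup (fun x => (‖f x‖₊ : ℝ≥0∞)) volume
    else ⨆ (t : ℝ) (_ : 0 < t), ENNReal.ofReal t * distFun f t ^ (1 / p.toReal)
  else
    p ^ (1 / q.toReal) *
      (∫⁻ t in Set.Ioi (0 : ℝ),
        ENNReal.ofReal (t ^ (q.toReal - 1)) * distFun f t ^ (q.toReal / p.toReal)) ^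
        (1 / q.toReal)

/-- Membership in the Lorentz space `L^{p,q}(ℝⁿ)`. -/
def MemLorentz {n : ℕ} (f : Rn n → ℂ) (p q : ℝ≥0∞) : Prop :=
  AEStronglyMeasurable f volume ∧ lorentzNorm f p q < ∞

/-- The constant `c_n = 1/(n(n-2)|B(0,1)|)` for which `c_n |x|^{2-n}` is the fundamental
solution of `-Δ` on `ℝⁿ`. -/
def fundConst (n : ℕ) : ℝ :=
  1 / ((n : ℝ) * ((n : ℝ) - 2) * (volume (Metric.ball (0 : Rn n) 1)).toReal)

/-- The iterated kernels: `G_0(x,y) = c_n |x-y|^{2-n}` and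
`G_j(x,y) = c_n ∫ |x-z|^{2-n} W(z) G_{j-1}(z,y) dz`. -/
def greenIter (n : ℕ) (W : Rn n → ℂ) : ℕ → Rn n → Rn n → ℂ
  | 0 => fun x y => (fundConst n : ℂ) * (((‖x - y‖ ^ (n - 2))⁻¹ : ℝ) : ℂ)
  | j + 1 => fun x y =>
      (fundConst n : ℂ) *
        ∫ z : Rn n, (((‖x - z‖ ^ (n - 2))⁻¹ : ℝ) : ℂ) * W z * greenIter n W j z y

/-- The constant `C = 2^{n-1} c_n ‖a‖_{n/(n-2),∞} ‖W‖_{n/2,1}`, with `a(x) = |x|^{-(n-2)}`. -/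
def greenC (n : ℕ) (W : Rn n → ℂ) : ℝ≥0∞ :=
  ENNReal.ofReal (2 ^ (n - 1) * fundConst n) *
    lorentzNorm (fun v : Rn n => (((‖v‖ ^ (n - 2))⁻¹ : ℝ) : ℂ))
      ((n : ℝ≥0∞) / ((n : ℝ≥0∞) - 2)) ∞ *
    lorentzNorm W ((n : ℝ≥0∞) / 2) 1

/-!
Among any three points `x, y, z`, one of `d(x, z)`, `d(z, y)` is at least `d(x, y) / 2`, so
`|x - z|^{2-n} |z - y|^{2-n} ≤ 2^{n-2} |x - y|^{2-n} (|x - z|^{2-n} + |z - y|^{2-n})`. Integrating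
against `|W|` shows that one step of the recursion costs at most a factor `2^{n-1} c_n` times the
global Kato norm `sup_x ∫ |x - z|^{2-n} |W(z)| dz`. This norm is at most
`‖a‖_{n/(n-2),∞} ‖W‖_{n/2,1}` by Hölder's inequality for Lorentz spaces: slice `|W|` into its level
sets `E_t = {|W| > t}`, and use that a function `f` in weak `L^p` satisfies
`∫_E |f| ≤ q ‖f‖_{p,∞} |E|^{1/q}` for the conjugate exponent `q`.
-/

section WeakType

variable {α E F : Type*} {mα : MeasurableSpace α} {μ : Measure α}
  [NormedAddCommGroup E] [NormedAddCommGroup F] {p q : ℝ}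

lemma lintegral_Ioi_ofReal_div_rpow (hp : 1 < p) {M s : ℝ} (hM : 0 ≤ M) (hs : 0 < s) :
    ∫⁻ t in Set.Ioi s, ENNReal.ofReal ((M / t) ^ p) =
      ENNReal.ofReal (s * (M / s) ^ p / (p - 1)) := by
  have hpos : ∀ t ∈ Set.Ioi s, 0 < t := fun t ht => hs.trans ht
  have hdiv : ∀ t, 0 < t → (M / t) ^ p = M ^ p * t ^ (-p) := fun t ht => by
    rw [Real.div_rpow hM ht.le, Real.rpow_neg ht.le, div_eq_mul_inv]
  calc ∫⁻ t in Set.Ioi s, ENNReal.ofReal ((M / t) ^ p)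
      = ∫⁻ t in Set.Ioi s, ENNReal.ofReal (M ^ p * t ^ (-p)) :=
        setLIntegral_congr_fun measurableSet_Ioi fun t ht => by rw [hdiv t (hpos t ht)]
    _ = ENNReal.ofReal (∫ t in Set.Ioi s, M ^ p * t ^ (-p)) := by
        refine (ofReal_integral_eq_lintegral_ofReal
          ((integrableOn_Ioi_rpow_of_lt (by linarith) hs).const_mul _) ?_).symm
        filter_upwards [ae_restrict_mem measurableSet_Ioi] with t ht
        have := hpos t ht
        positivity
    _ = ENNReal.ofReal (s * (M / s) ^ p / (p - 1)) := by
        rw [integral_const_mul, integral_Ioi_rpow_of_lt (by linarith) hs, hdiv s hs,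
          Real.rpow_add hs, Real.rpow_one, neg_div, ← div_neg, neg_add', neg_neg]
        ring_nf

lemma lintegral_min_ofReal_div_rpow_le (hpq : p.HolderConjugate q) {m M : ℝ}
    (hm : 0 < m) (hM : 0 < M) :
    ∫⁻ t in Set.Ioi (0 : ℝ), min (ENNReal.ofReal m) (ENNReal.ofReal ((M / t) ^ p)) ≤
      ENNReal.ofReal (M * (q * m ^ q⁻¹)) := by
  set s : ℝ := M / m ^ p⁻¹ with hs
  have hs0 : 0 < s := by positivity
  have hMs : (M / s) ^ p = m := by
    rw [hs, div_div_cancel₀ hM.ne', Real.rpow_inv_rpow hm.le hpq.ne_zero]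
  have hsm : s * m = M * m ^ q⁻¹ := by
    rw [← hpq.one_sub_inv, Real.rpow_sub hm, Real.rpow_one, hs]
    ring
  calc ∫⁻ t in Set.Ioi (0 : ℝ), min (ENNReal.ofReal m) (ENNReal.ofReal ((M / t) ^ p))
      ≤ (∫⁻ _ in Set.Ioc 0 s, ENNReal.ofReal m) +
          ∫⁻ t in Set.Ioi s, ENNReal.ofReal ((M / t) ^ p) := by
        rw [← Set.Ioc_union_Ioi_eq_Ioi hs0.le,
          lintegral_union measurableSet_Ioi (Set.Ioc_disjoint_Ioi le_rfl)]
        gcongr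
        exacts [min_le_left _ _, min_le_right _ _]
    _ = ENNReal.ofReal (m * s + s * m / (p - 1)) := by
        rw [setLIntegral_const, Real.volume_Ioc, sub_zero,
          lintegral_Ioi_ofReal_div_rpow hpq.lt hM.le hs0, hMs, ← ENNReal.ofReal_mul hm.le,
          ← ENNReal.ofReal_add (by positivity)
            (div_nonneg (by positivity) hpq.sub_one_pos.le)]
    _ = ENNReal.ofReal (M * (q * m ^ q⁻¹)) := by
        have := hpq.sub_one_ne_zero
        rw [mul_left_comm, ← hsm, hpq.conjugate_eq]
        congr 1
        field_simp
        ring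

lemma lintegral_min_div_rpow_le (hpq : p.HolderConjugate q) (m M : ℝ≥0∞) :
    ∫⁻ t in Set.Ioi (0 : ℝ), min m ((M / ENNReal.ofReal t) ^ p) ≤
      M * (ENNReal.ofReal q * m ^ q⁻¹) := by
  have hq : ENNReal.ofReal q ≠ 0 := by simpa using hpq.symm.pos
  rcases eq_or_ne m 0 with rfl | hm
  · simp
  rcases eq_or_ne M 0 with rfl | hM
  · simp [hpq.pos]
  rcases eq_or_ne m ∞ with rfl | hm'
  · simp [hpq.symm.pos, hM, hq]
  rcases eq_or_ne M ∞ with rfl | hM'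
  · simp [ENNReal.top_mul, hm, hm', hq]
  lift m to ℝ≥0 using hm'
  lift M to ℝ≥0 using hM'
  have hm0 : (0 : ℝ) < m := by exact_mod_cast pos_iff_ne_zero.2 hm
  have hM0 : (0 : ℝ) < M := by exact_mod_cast pos_iff_ne_zero.2 hM
  have hq0 := hpq.symm.nonneg
  convert lintegral_min_ofReal_div_rpow_le hpq hm0 hM0 using 1
  · refine setLIntegral_congr_fun measurableSet_Ioi fun t (ht : 0 < t) => ?_
    simp only [← ENNReal.ofReal_rpow_of_nonneg (div_nonneg hM0.le ht.le) hpq.nonneg,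
      ENNReal.ofReal_div_of_pos ht, ENNReal.ofReal_coe_nnreal]
  · rw [ENNReal.ofReal_mul hM0.le, ENNReal.ofReal_mul hq0,
      ← ENNReal.ofReal_rpow_of_pos hm0, ENNReal.ofReal_coe_nnreal, ENNReal.ofReal_coe_nnreal]

lemma setLIntegral_enorm_le_of_meas_lt_le (hpq : p.HolderConjugate q) {f : α → E}
    (hf : AEStronglyMeasurable f μ) {M : ℝ≥0∞}
    (hM : ∀ t : ℝ, 0 < t → μ {x | t < ‖f x‖} ≤ (M / ENNReal.ofReal t) ^ p) (s : Set α) :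
    ∫⁻ x in s, ‖f x‖ₑ ∂μ ≤ M * (ENNReal.ofReal q * μ s ^ q⁻¹) :=
  calc ∫⁻ x in s, ‖f x‖ₑ ∂μ
      = ∫⁻ t in Set.Ioi (0 : ℝ), μ.restrict s {x | t < ‖f x‖} := by
        simp only [← ofReal_norm]
        exact lintegral_eq_lintegral_meas_lt _ (.of_forall fun _ => norm_nonneg _)
          hf.norm.aemeasurable.restrict
    _ ≤ ∫⁻ t in Set.Ioi (0 : ℝ), min (μ s) ((M / ENNReal.ofReal t) ^ p) := by
        refine setLIntegral_mono' measurableSet_Ioi fun t ht => le_min ?_ ?_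
        · exact (measure_mono (Set.subset_univ _)).trans_eq (Measure.restrict_apply_univ s)
        · exact (Measure.restrict_apply_le _ _).trans (hM t ht)
    _ ≤ M * (ENNReal.ofReal q * μ s ^ q⁻¹) := lintegral_min_div_rpow_le hpq _ _

lemma lintegral_enorm_mul_enorm_eq_lintegral_setLIntegral {f : α → E} {g : α → F}
    (hf : AEStronglyMeasurable f μ) (hg : AEStronglyMeasurable g μ) :
    ∫⁻ x, ‖f x‖ₑ * ‖g x‖ₑ ∂μ =
      ∫⁻ t in Set.Ioi (0 : ℝ), ∫⁻ x in {x | t < ‖g x‖}, ‖f x‖ₑ ∂μ := by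
  have hac := withDensity_absolutelyContinuous μ fun x => ‖f x‖ₑ
  have hlevel : ∀ t : ℝ, NullMeasurableSet {x | t < ‖g x‖} μ := fun t =>
    nullMeasurableSet_lt aemeasurable_const hg.norm.aemeasurable
  calc ∫⁻ x, ‖f x‖ₑ * ‖g x‖ₑ ∂μ
      = ∫⁻ x, ENNReal.ofReal ‖g x‖ ∂μ.withDensity fun x => ‖f x‖ₑ := by
        simp only [ofReal_norm]
        exact (lintegral_withDensity_eq_lintegral_mul₀ hf.enorm hg.enorm).symm
    _ = ∫⁻ t in Set.Ioi (0 : ℝ), ∫⁻ x in {x | t < ‖g x‖}, ‖f x‖ₑ ∂μ := by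
        rw [lintegral_eq_lintegral_meas_lt _ (.of_forall fun _ => norm_nonneg _)
          (hg.norm.aemeasurable.mono_ac hac)]
        simp only [withDensity_apply₀ _ (hlevel _)]

lemma lintegral_enorm_mul_enorm_le_of_meas_lt_le (hpq : p.HolderConjugate q) {f : α → E}
    {g : α → F} (hf : AEStronglyMeasurable f μ) (hg : AEStronglyMeasurable g μ) {M : ℝ≥0∞}
    (hM : ∀ t : ℝ, 0 < t → μ {x | t < ‖f x‖} ≤ (M / ENNReal.ofReal t) ^ p) :
    ∫⁻ x, ‖f x‖ₑ * ‖g x‖ₑ ∂μ ≤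
      M * (ENNReal.ofReal q * ∫⁻ t in Set.Ioi (0 : ℝ), μ {x | t < ‖g x‖} ^ q⁻¹) := by
  have hanti : Antitone fun t : ℝ => μ {x | t < ‖g x‖} ^ q⁻¹ := fun s t hst =>
    ENNReal.rpow_le_rpow (measure_mono fun _ => hst.trans_lt) hpq.symm.inv_nonneg
  rw [lintegral_enorm_mul_enorm_eq_lintegral_setLIntegral hf hg,
    ← lintegral_const_mul _ hanti.measurable,
    ← lintegral_const_mul _ (hanti.measurable.const_mul _)]
  exact lintegral_mono fun t => setLIntegral_enorm_le_of_meas_lt_le hpq hf hM _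

end WeakType

section Lorentz

variable {n : ℕ} {f g : Rn n → ℂ} {p q : ℝ≥0∞}

lemma lorentzNorm_top_right (hp : p ≠ ∞) :
    lorentzNorm f p ∞ =
      ⨆ (t : ℝ) (_ : 0 < t), ENNReal.ofReal t * distFun f t ^ (1 / p.toReal) := by
  rw [lorentzNorm, if_pos rfl, if_neg hp]

lemma lorentzNorm_one_right :
    lorentzNorm f p 1 =
      p * ∫⁻ t in Set.Ioi (0 : ℝ), distFun f t ^ p.toReal⁻¹ := by
  simp [lorentzNorm]

lemma distFun_le_lorentzNorm_div_rpow (hp₀ : p ≠ 0) (hp : p ≠ ∞) {t : ℝ} (ht : 0 < t) :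
    distFun f t ≤ (lorentzNorm f p ∞ / ENNReal.ofReal t) ^ p.toReal := by
  have hbound : ENNReal.ofReal t * distFun f t ^ (1 / p.toReal) ≤ lorentzNorm f p ∞ := by
    rw [lorentzNorm_top_right hp]
    exact le_iSup₂ (f := fun (t : ℝ) (_ : 0 < t) =>
      ENNReal.ofReal t * distFun f t ^ (1 / p.toReal)) t ht
  rw [← ENNReal.rpow_inv_le_iff (ENNReal.toReal_pos hp₀ hp),
    ENNReal.le_div_iff_mul_le (by simp [ht]) (by simp), mul_comm, ← one_div]
  exact hbound

lemma distFun_comp_sub_left (f : Rn n → ℂ) (x : Rn n) :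
    distFun (fun z => f (x - z)) = distFun f := by
  ext t
  exact (Measure.measurePreserving_sub_left volume x).measure_preimage_equiv
    (f := MeasurableEquiv.subLeft x) {z | t < ‖f z‖}

lemma lorentzNorm_top_right_comp_sub_left (hp : p ≠ ∞) (f : Rn n → ℂ) (x : Rn n) :
    lorentzNorm (fun z => f (x - z)) p ∞ = lorentzNorm f p ∞ := by
  simp only [lorentzNorm_top_right hp, distFun_comp_sub_left]

lemma lintegral_enorm_mul_enorm_le_lorentzNorm_mul_lorentzNorm
    (hpq : p.toReal.HolderConjugate q.toReal)
    (hf : AEStronglyMeasurable f volume) (hg : AEStronglyMeasurable g volume) :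
    ∫⁻ x, ‖f x‖ₑ * ‖g x‖ₑ ≤ lorentzNorm f p ∞ * lorentzNorm g q 1 := by
  obtain ⟨hp₀, hp⟩ := ENNReal.toReal_pos_iff.1 hpq.pos
  obtain ⟨-, hq⟩ := ENNReal.toReal_pos_iff.1 hpq.symm.pos
  rw [lorentzNorm_one_right, ← ENNReal.ofReal_toReal hq.ne, ENNReal.toReal_ofReal hpq.symm.nonneg]
  exact lintegral_enorm_mul_enorm_le_of_meas_lt_le hpq hf hg fun t ht =>
    distFun_le_lorentzNorm_div_rpow hp₀.ne' hp.ne ht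

end Lorentz

section RieszKernel

variable {X : Type*} [PseudoEMetricSpace X] {s : ℝ}

/-- The Riesz kernel `d(x, y)^{-s}`. For `s > 0` it takes the value `∞`, not a junk value, on the
diagonal, so that the 3G inequality holds at all points. -/
def rieszKernel (s : ℝ) (x y : X) : ℝ≥0∞ :=
  edist x y ^ (-s)

lemma rieszKernel_comm (s : ℝ) (x y : X) : rieszKernel s x y = rieszKernel s y x := by
  rw [rieszKernel, rieszKernel, edist_comm]

lemma rieszKernel_le_of_edist_le (hs : 0 ≤ s) {x y z w : X}
    (h : edist x y ≤ 2 * edist z w) : rieszKernel s z w ≤ 2 ^ s * rieszKernel s x y := by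
  have hinv : (edist z w)⁻¹ ≤ 2 * (edist x y)⁻¹ := by
    calc (edist z w)⁻¹ = 2 * (2 * edist z w)⁻¹ := by
          rw [ENNReal.mul_inv (by simp) (by simp),
            ENNReal.mul_inv_cancel_left two_ne_zero ENNReal.ofNat_ne_top]
      _ ≤ 2 * (edist x y)⁻¹ := by gcongr
  simp only [rieszKernel, ENNReal.rpow_neg, ← ENNReal.inv_rpow]
  rw [← ENNReal.mul_rpow_of_nonneg _ _ hs]
  exact ENNReal.rpow_le_rpow hinv hs

/-- The 3G inequality: the larger of `d(x, z)` and `d(z, y)` is at least `d(x, y) / 2`. -/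
lemma rieszKernel_mul_rieszKernel_le (hs : 0 ≤ s) (x y z : X) :
    rieszKernel s x z * rieszKernel s z y ≤
      2 ^ s * rieszKernel s x y * (rieszKernel s x z + rieszKernel s z y) := by
  have htri : edist x y ≤ edist x z + edist z y := edist_triangle x z y
  rcases le_total (edist x z) (edist z y) with h | h
  · have hfar : rieszKernel s z y ≤ 2 ^ s * rieszKernel s x y :=
      rieszKernel_le_of_edist_le hs (htri.trans (by rw [two_mul]; gcongr))
    rw [mul_comm (rieszKernel s x z)]
    exact mul_le_mul' hfar le_self_add
  · have hfar : rieszKernel s x z ≤ 2 ^ s * rieszKernel s x y :=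
      rieszKernel_le_of_edist_le hs (htri.trans (by rw [two_mul]; gcongr))
    exact mul_le_mul' hfar le_add_self

variable [MeasurableSpace X]

/-- The global Kato norm `sup_x ∫ d(x, z)^{-s} w(z) dμ(z)` of a nonnegative weight `w`. It controls
the iteration of the kernel `d(x, z)^{-s} w(z)`. -/
def katoNorm (s : ℝ) (w : X → ℝ≥0∞) (μ : Measure X) : ℝ≥0∞ :=
  ⨆ x, ∫⁻ z, rieszKernel s x z * w z ∂μ

variable {μ : Measure X} {w : X → ℝ≥0∞}

lemma lintegral_rieszKernel_mul_le_katoNorm (x : X) :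
    ∫⁻ z, rieszKernel s x z * w z ∂μ ≤ katoNorm s w μ :=
  le_iSup (fun x => ∫⁻ z, rieszKernel s x z * w z ∂μ) x

variable [OpensMeasurableSpace X]

lemma measurable_rieszKernel (s : ℝ) (x : X) : Measurable (rieszKernel s x) :=
  measurable_edist_right.pow_const _

lemma lintegral_rieszKernel_mul_rieszKernel_le (hs : 0 ≤ s) (hw : AEMeasurable w μ) (x y : X) :
    ∫⁻ z, rieszKernel s x z * w z * rieszKernel s z y ∂μ ≤
      2 * 2 ^ s * katoNorm s w μ * rieszKernel s x y := by
  have hmeas : ∀ x : X, AEMeasurable (fun z => rieszKernel s x z * w z) μ := fun x =>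
    (measurable_rieszKernel s x).aemeasurable.mul hw
  calc ∫⁻ z, rieszKernel s x z * w z * rieszKernel s z y ∂μ
      ≤ ∫⁻ z, 2 ^ s * rieszKernel s x y *
          (rieszKernel s x z * w z + rieszKernel s y z * w z) ∂μ := by
        refine lintegral_mono fun z => ?_
        rw [mul_right_comm, ← add_mul, ← mul_assoc, rieszKernel_comm s y z]
        exact mul_le_mul_left (rieszKernel_mul_rieszKernel_le hs x y z) _
    _ = 2 ^ s * rieszKernel s x y *
          (∫⁻ z, rieszKernel s x z * w z ∂μ + ∫⁻ z, rieszKernel s y z * w z ∂μ) := by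
        rw [lintegral_const_mul'' _ ((hmeas x).fun_add (hmeas y)), lintegral_add_left' (hmeas x)]
    _ ≤ 2 ^ s * rieszKernel s x y * (katoNorm s w μ + katoNorm s w μ) := by
        gcongr <;> exact lintegral_rieszKernel_mul_le_katoNorm _
    _ = 2 * 2 ^ s * katoNorm s w μ * rieszKernel s x y := by ring

lemma le_pow_mul_rieszKernel_of_recursion (hs : 0 ≤ s) (hw : AEMeasurable w μ) {c : ℝ≥0∞}
    {G : ℕ → X → X → ℝ≥0∞} (hzero : ∀ x y, G 0 x y ≤ c * rieszKernel s x y)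
    (hsucc : ∀ j x y, G (j + 1) x y ≤ c * ∫⁻ z, rieszKernel s x z * w z * G j z y ∂μ)
    (j : ℕ) (x y : X) :
    G j x y ≤ (2 * 2 ^ s * c * katoNorm s w μ) ^ j * (c * rieszKernel s x y) := by
  induction j generalizing x with
  | zero => simpa using hzero x y
  | succ j ih =>
    have hmeas : AEMeasurable (fun z => rieszKernel s x z * w z * rieszKernel s z y) μ :=
      ((measurable_rieszKernel s x).aemeasurable.mul hw).mul
        (measurable_edist_left.pow_const _).aemeasurable
    set D := (2 * 2 ^ s * c * katoNorm s w μ) ^ j with hD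
    calc G (j + 1) x y
        ≤ c * ∫⁻ z, rieszKernel s x z * w z * (D * (c * rieszKernel s z y)) ∂μ := by
          refine (hsucc j x y).trans ?_
          gcongr with z
          exact ih z
      _ = c * (D * c * ∫⁻ z, rieszKernel s x z * w z * rieszKernel s z y ∂μ) := by
          rw [← lintegral_const_mul'' _ hmeas]
          congr! 3 with z
          ring
      _ ≤ c * (D * c * (2 * 2 ^ s * katoNorm s w μ * rieszKernel s x y)) := by
          gcongr
          exact lintegral_rieszKernel_mul_rieszKernel_le hs hw x y
      _ = (2 * 2 ^ s * c * katoNorm s w μ) ^ (j + 1) * (c * rieszKernel s x y) := by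
          rw [pow_succ, ← hD]
          ring

end RieszKernel

section Green

variable {n : ℕ} {W : Rn n → ℂ}

lemma enorm_inv_norm_sub_pow {x y : Rn n} (hxy : x ≠ y) (k : ℕ) :
    ‖(((‖x - y‖ ^ k)⁻¹ : ℝ) : ℂ)‖ₑ = rieszKernel k x y := by
  have hne : ‖x - y‖ ≠ 0 := norm_ne_zero_iff.2 (sub_ne_zero.2 hxy)
  rw [← ofReal_norm, Complex.norm_real, ofReal_norm, enorm_inv (pow_ne_zero k hne), enorm_pow,
    enorm_norm, rieszKernel, edist_eq_enorm_sub, ENNReal.rpow_neg, ENNReal.rpow_natCast]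

/-- On the diagonal the left-hand side is the junk value `0⁻¹ = 0` unless `k = 0`. -/
lemma enorm_inv_norm_sub_pow_le (x y : Rn n) (k : ℕ) :
    ‖(((‖x - y‖ ^ k)⁻¹ : ℝ) : ℂ)‖ₑ ≤ rieszKernel k x y := by
  rcases eq_or_ne x y with rfl | hxy
  · rcases eq_or_ne k 0 with rfl | hk <;> simp [rieszKernel, *]
  · exact (enorm_inv_norm_sub_pow hxy k).le

lemma fundConst_nonneg (hn : 2 ≤ n) : 0 ≤ fundConst n := by
  have hn' : 0 ≤ (n : ℝ) - 2 := sub_nonneg.2 (by exact_mod_cast hn)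
  unfold fundConst
  positivity

lemma enorm_greenIter_zero (x y : Rn n) :
    ‖greenIter n W 0 x y‖ₑ =
      ‖(fundConst n : ℂ)‖ₑ * ‖(((‖x - y‖ ^ (n - 2))⁻¹ : ℝ) : ℂ)‖ₑ :=
  enorm_mul _ _

lemma enorm_greenIter_succ_le (j : ℕ) (x y : Rn n) :
    ‖greenIter n W (j + 1) x y‖ₑ ≤ ‖(fundConst n : ℂ)‖ₑ *
      ∫⁻ z, rieszKernel (n - 2 : ℕ) x z * ‖W z‖ₑ * ‖greenIter n W j z y‖ₑ := by
  rw [greenIter, enorm_mul]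
  gcongr
  refine (enorm_integral_le_lintegral_enorm _).trans (lintegral_mono fun z => ?_)
  rw [enorm_mul, enorm_mul]
  gcongr
  exact enorm_inv_norm_sub_pow_le x z _

lemma katoNorm_enorm_le_lorentzNorm_mul_lorentzNorm [Nonempty (Fin n)] {p q : ℝ≥0∞}
    (hpq : p.toReal.HolderConjugate q.toReal) (k : ℕ) (hW : AEStronglyMeasurable W volume) :
    katoNorm k (‖W ·‖ₑ) volume ≤
      lorentzNorm (fun v : Rn n => (((‖v‖ ^ k)⁻¹ : ℝ) : ℂ)) p ∞ * lorentzNorm W q 1 := by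
  have hp : p ≠ ∞ := (ENNReal.toReal_pos_iff.1 hpq.pos).2.ne
  refine iSup_le fun x => ?_
  rw [← lorentzNorm_top_right_comp_sub_left hp _ x]
  calc ∫⁻ z, rieszKernel k x z * ‖W z‖ₑ
      = ∫⁻ z, ‖(((‖x - z‖ ^ k)⁻¹ : ℝ) : ℂ)‖ₑ * ‖W z‖ₑ := by
        refine lintegral_congr_ae ?_
        filter_upwards [Measure.ae_ne volume x] with z hz
        rw [enorm_inv_norm_sub_pow hz.symm]
    _ ≤ lorentzNorm (fun z : Rn n => (((‖x - z‖ ^ k)⁻¹ : ℝ) : ℂ)) p ∞ * lorentzNorm W q 1 :=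
        lintegral_enorm_mul_enorm_le_lorentzNorm_mul_lorentzNorm hpq
          (Measurable.aestronglyMeasurable (by fun_prop)) hW

lemma holderConjugate_toReal_div_sub_two (hn : 3 ≤ n) :
    ((n : ℝ≥0∞) / ((n : ℝ≥0∞) - 2)).toReal.HolderConjugate ((n : ℝ≥0∞) / 2).toReal := by
  have hn' : (3 : ℝ) ≤ n := by exact_mod_cast hn
  have hsub : ((n : ℝ≥0∞) - 2).toReal = n - 2 := by
    rw [ENNReal.toReal_sub_of_le (by exact_mod_cast (by omega : 2 ≤ n)) (by simp)]
    simp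
  rw [ENNReal.toReal_div, ENNReal.toReal_div, hsub, ENNReal.toReal_natCast, ENNReal.toReal_ofNat,
    Real.holderConjugate_iff, one_lt_div (by linarith)]
  refine ⟨by linarith, ?_⟩
  field_simp
  ring

lemma ofReal_mul_katoNorm_enorm_le_greenC (hn : 3 ≤ n) (hW : AEStronglyMeasurable W volume) :
    ENNReal.ofReal (2 ^ (n - 1) * fundConst n) * katoNorm (n - 2 : ℕ) (‖W ·‖ₑ) volume ≤
      greenC n W := by
  have : Nonempty (Fin n) := ⟨⟨0, by omega⟩⟩
  rw [greenC, mul_assoc]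
  gcongr
  exact katoNorm_enorm_le_lorentzNorm_mul_lorentzNorm (holderConjugate_toReal_div_sub_two hn) _ hW

theorem greenIter_bound_general (hn : 3 ≤ n) (hW : AEStronglyMeasurable W volume)
    (j : ℕ) {x y : Rn n} (hxy : x ≠ y) :
    ‖greenIter n W j x y‖ₑ ≤
      (ENNReal.ofReal (2 ^ (n - 1) * fundConst n) * katoNorm (n - 2 : ℕ) (‖W ·‖ₑ) volume) ^ j *
        ‖greenIter n W 0 x y‖ₑ := by
  have hconst : ENNReal.ofReal (2 ^ (n - 1) * fundConst n) =
      2 * 2 ^ ((n - 2 : ℕ) : ℝ) * ‖(fundConst n : ℂ)‖ₑ := by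
    rw [← ofReal_norm, Complex.norm_real, Real.norm_of_nonneg (fundConst_nonneg (by omega)),
      ENNReal.ofReal_mul (by positivity), ENNReal.ofReal_pow zero_le_two, ENNReal.ofReal_ofNat,
      ENNReal.rpow_natCast, ← pow_succ', show n - 2 + 1 = n - 1 by omega]
  rw [hconst, enorm_greenIter_zero, enorm_inv_norm_sub_pow hxy]
  refine le_pow_mul_rieszKernel_of_recursion (G := fun j x y => ‖greenIter n W j x y‖ₑ)
    (Nat.cast_nonneg _) hW.enorm (fun x y => ?_) enorm_greenIter_succ_le j x y
  rw [enorm_greenIter_zero]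
  gcongr
  exact enorm_inv_norm_sub_pow_le x y _

end Green

/-- For `n ≥ 3` and `W ∈ L^{n/2,1}(ℝⁿ)`, the iterated kernels satisfy
`|G_j(x,y)| ≤ C^j G_0(x,y)` for all `j` and `x ≠ y`, where
`C = 2^{n-1} c_n ‖a‖_{n/(n-2),∞} ‖W‖_{n/2,1}` and `a(x) = |x|^{-(n-2)}`. -/
theorem greenIter_bound
    (n : ℕ) (hn : 3 ≤ n) (W : Rn n → ℂ)
    (hW : MemLorentz W ((n : ℝ≥0∞) / 2) 1)
    (j : ℕ) (x y : Rn n) (hxy : x ≠ y) :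
    (‖greenIter n W j x y‖₊ : ℝ≥0∞) ≤
      greenC n W ^ j * (‖greenIter n W 0 x y‖₊ : ℝ≥0∞) := by
  exact (greenIter_bound_general hn hW.1 j hxy).trans <|
    mul_le_mul_left (pow_le_pow_left' (ofReal_mul_katoNorm_enorm_le_greenC hn hW.1) j) _
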